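/- Let k ≥ 6 and n ≥ 2k. Then there exist seven matrices M₁, …, M₇ in SL(n, ℤ), each of order exactly k, such that the subgroup they generate is all of SL(n, ℤ). -/

import Mathlib

open Matrix
abbrev SLZ (n : ℕ) := Matrix.SpecialLinearGroup (Fin n) ℤ

section Gen
variable {n : ℕ}

/-- elementary matrix, trivial when `i = j` -/
def el (i j : Fin n) (c : ℤ) : SLZ n :=
  if h : i ≠ j then ⟨Matrix.transvection i j c, Matrix.det_transvection_of_ne i j h c⟩ else 1

lemma el_coe {i j : Fin n} (h : i ≠ j) (c : ℤ) :
    ((el i j c : SLZ n) : Matrix (Fin n) (Fin n) ℤ) = 1 + Matrix.single i j c := by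
  simp [el, h, Matrix.transvection]

lemma el_mul_apply {i j : Fin n} (h : i ≠ j) (c : ℤ) (A : SLZ n) (r s : Fin n) :
    (el i j c * A) r s = A r s + if r = i then c * A j s else 0 := by
  rw [Matrix.SpecialLinearGroup.coe_mul, el_coe h]
  by_cases hr : r = i
  · subst hr; simp [Matrix.add_mul]
  · simp [Matrix.add_mul, hr]

lemma el_add {i j : Fin n} (h : i ≠ j) (c d : ℤ) : el i j c * el i j d = el i j (c + d) := by
  ext r s
  rw [Matrix.SpecialLinearGroup.coe_mul, el_coe h, el_coe h, el_coe h]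
  have := Matrix.transvection_mul_transvection_same (n := Fin n) (R := ℤ) i j h c d
  simp only [Matrix.transvection] at this
  rw [this]

lemma el_zero {i j : Fin n} (h : i ≠ j) : el i j 0 = 1 := by
  ext r s
  rw [el_coe h]; simp

lemma el_neg {i j : Fin n} (h : i ≠ j) (c : ℤ) : el i j (-c) = (el i j c)⁻¹ := by
  rw [eq_inv_iff_mul_eq_one, el_add h]; simp [el_zero h]

lemma el_mem (H : Subgroup (SLZ n)) {i j : Fin n} (h : i ≠ j) (h1 : el i j 1 ∈ H) (c : ℤ) :
    el i j c ∈ H := by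
  induction c using Int.induction_on with
  | zero => rw [el_zero h]; exact H.one_mem
  | succ m ih => rw [← el_add h]; exact H.mul_mem ih h1
  | pred m ih => rw [sub_eq_add_neg, ← el_add h, el_neg h 1]; exact H.mul_mem ih (H.inv_mem h1)


lemma mem_of_el_mul (H : Subgroup (SLZ n)) (hH : ∀ i j : Fin n, i ≠ j → ∀ c, el i j c ∈ H) {i j : Fin n} (h : i ≠ j) (c : ℤ) {A : SLZ n} (hA : el i j c * A ∈ H) :
    A ∈ H := (H.mul_mem_cancel_left (hH i j h c)).1 hA

/-- clear a column with a `1` in it -/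
lemma clear_col (H : Subgroup (SLZ n)) (hH : ∀ i j : Fin n, i ≠ j → ∀ c, el i j c ∈ H) (t : Fin n) (P : ∀ A : SLZ n, (∀ j : Fin n, j ≤ t → ∀ i, A i j = if i = j then 1 else 0) → A ∈ H)
    (N : ℕ) : ∀ A : SLZ n, (∀ j : Fin n, j < t → ∀ i, A i j = if i = j then 1 else 0) →
      A t t = 1 → (Finset.univ.filter fun i => i ≠ t ∧ A i t ≠ 0).card = N → A ∈ H := by
  induction N using Nat.strong_induction_on with
  | _ N ih =>
    intro A hA ht hN
    by_cases hall : ∀ i, i ≠ t → A i t = 0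
    · apply P A
      intro j hj i
      rcases lt_or_eq_of_le hj with hj | rfl
      · exact hA j hj i
      · by_cases h : i = j
        · subst h; simp [ht]
        · simp [h, hall i h]
    · push Not at hall
      obtain ⟨i, hi, hi0⟩ := hall
      apply mem_of_el_mul H hH hi (-(A i t))
      refine ih _ ?_ (el i t (-(A i t)) * A) ?_ ?_ rfl
      · rw [← hN]
        apply Finset.card_lt_card
        rw [Finset.ssubset_iff_of_subset]
        · refine ⟨i, by simp [hi, hi0], ?_⟩
          simp only [Finset.mem_filter, el_mul_apply hi, ht]
          simp
        · intro r
          simp only [Finset.mem_filter, el_mul_apply hi, ht]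
          by_cases hr : r = i
          · subst hr; simp
          · simp [hr]
      · intro j hj r
        rw [el_mul_apply hi, hA j hj r, hA j hj t]
        simp [hj.ne']
      · rw [el_mul_apply hi]; simp [hi.symm, ht]

lemma euclid_col (H : Subgroup (SLZ n)) (hH : ∀ i j : Fin n, i ≠ j → ∀ c, el i j c ∈ H) (t : Fin n) (P : ∀ A : SLZ n, (∀ j : Fin n, j ≤ t → ∀ i, A i j = if i = j then 1 else 0) → A ∈ H)
    (N : ℕ) : ∀ A : SLZ n, (∀ j : Fin n, j < t → ∀ i, A i j = if i = j then 1 else 0) →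
      (∑ i ∈ Finset.univ.filter (fun i => t ≤ i), (A i t).natAbs) = N → A ∈ H := by
  induction N using Nat.strong_induction_on with
  | _ N ih =>
    intro A hA hN
    have key : ∀ (i j : Fin n) (h : i ≠ j) (c : ℤ), t ≤ j → 
        ∀ j' : Fin n, j' < t → ∀ r, (el i j c * A) r j' = if r = j' then 1 else 0 := by
      intro i j h c hj j' hj' r
      rw [el_mul_apply h, hA j' hj' r, hA j' hj' j]
      simp [(lt_of_lt_of_le hj' hj).ne']
    by_cases hpq : ∃ p q : Fin n, p ≠ q ∧ t ≤ p ∧ t ≤ q ∧ A p t ≠ 0 ∧ A q t ≠ 0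
    · obtain ⟨p, q, hne, hp, hq, hp0, hq0⟩ := hpq
      wlog hle : (A p t).natAbs ≤ (A q t).natAbs generalizing p q
      · exact this q p hne.symm hq hp hq0 hp0 (by omega)
      obtain ⟨c, hc⟩ : ∃ c : ℤ, (A q t + c * A p t).natAbs < (A q t).natAbs := by
        rcases lt_or_gt_of_ne hp0 with h1 | h1 <;> rcases lt_or_gt_of_ne hq0 with h2 | h2
        · exact ⟨-1, by omega⟩
        · exact ⟨1, by omega⟩
        · exact ⟨1, by omega⟩
        · exact ⟨-1, by omega⟩
      apply mem_of_el_mul H hH hne.symm c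
      refine ih _ ?_ (el q p c * A) (key q p hne.symm c hp) rfl
      rw [← hN]
      apply Finset.sum_lt_sum
      · intro i _
        rw [el_mul_apply hne.symm]
        by_cases hi : i = q
        · subst hi; simp only [if_true]; omega
        · simp [hi]
      · refine ⟨q, by simp [hq], ?_⟩
        rw [el_mul_apply hne.symm]
        simpa using hc
    · push Not at hpq
      have hB : (A⁻¹ * A) t t = 1 := by simp
      have hBj : ∀ j, j < t → A⁻¹ t j = 0 := by
        intro j hj
        have h1 : (A⁻¹ * A) t j = 0 := by simp [hj.ne']
        rw [Matrix.SpecialLinearGroup.coe_mul, Matrix.mul_apply] at h1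
        simpa [hA j hj] using h1
      rw [Matrix.SpecialLinearGroup.coe_mul, Matrix.mul_apply] at hB
      obtain ⟨p, hp, hp0⟩ : ∃ p, t ≤ p ∧ A p t ≠ 0 := by
        by_contra hcon
        push Not at hcon
        rw [Finset.sum_eq_zero] at hB
        · exact absurd hB (by norm_num)
        · intro i _
          rcases lt_or_ge i t with h | h
          · rw [hBj i h]; simp
          · rw [hcon i h]; simp
      have hz : ∀ q, t ≤ q → q ≠ p → A q t = 0 := fun q hq hqp => hpq p q hqp.symm hp hq hp0
      rw [Finset.sum_eq_single p] at hB
      rotate_left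
      · intro i _ hi
        rcases lt_or_ge i t with h | h
        · rw [hBj i h]; simp
        · rw [hz i h hi]; simp
      · simp
      have hu : A p t = 1 ∨ A p t = -1 := Int.isUnit_iff.1 (IsUnit.of_mul_eq_one_right _ hB)
      by_cases hpt : p = t
      · subst hpt
        rcases hu with hu | hu
        · exact clear_col H hH p P _ A hA hu rfl
        · by_cases hs : ∃ s, p < s
          · obtain ⟨s, hs⟩ := hs
            apply mem_of_el_mul H hH hs.ne' 1
            apply mem_of_el_mul H hH hs.ne (-2)
            refine clear_col H hH p P _ _ ?_ ?_ rfl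
            · intro j' hj' r
              rw [el_mul_apply hs.ne, key s p hs.ne' 1 le_rfl j' hj', key s p hs.ne' 1 le_rfl j' hj']
              simp [(hj'.trans hs).ne']
            · rw [el_mul_apply hs.ne, el_mul_apply hs.ne', el_mul_apply hs.ne', hu, hz s hs.le hs.ne']
              simp [hs.ne]
          · exfalso
            push Not at hs
            have hd := A.det_coe
            rw [Matrix.det_of_isUpperTriangular, Finset.prod_eq_single p, hu] at hd
            · exact absurd hd (by norm_num)
            · intro b _ hb
              have := lt_of_le_of_ne (hs b) hb
              rw [hA b this]; simp
            · simp
            · intro i j hij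
              simp only [id] at hij
              rw [hA j (lt_of_lt_of_le hij (hs i))]
              simp [hij.ne']
      · apply mem_of_el_mul H hH (Ne.symm hpt) (A p t)
        refine clear_col H hH t P _ _ (key t p (Ne.symm hpt) _ hp) ?_ rfl
        rw [el_mul_apply (Ne.symm hpt), hz t le_rfl (Ne.symm hpt)]
        rcases hu with hu | hu <;> simp [hu]

lemma all_mem_aux (H : Subgroup (SLZ n)) (hH : ∀ i j : Fin n, i ≠ j → ∀ c, el i j c ∈ H) (N : ℕ) : ∀ A : SLZ n, (∀ j : Fin n, (j : ℕ) + N < n → ∀ i, A i j = if i = j then 1 else 0) → A ∈ H := by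
  induction N with
  | zero =>
    intro A hA
    have : A = 1 := by
      ext i j
      rw [hA j (by have := j.2; omega)]
      simp [Matrix.one_apply]
    rw [this]; exact H.one_mem
  | succ N ih =>
    intro A hA
    by_cases hN : N < n
    · refine euclid_col H hH ⟨n - 1 - N, by omega⟩ ?_ _ A ?_ rfl
      · intro B hB
        apply ih B
        intro j hj
        apply hB
        rw [Fin.le_def]; simp only; omega
      · intro j hj
        apply hA
        rw [Fin.lt_def] at hj; simp only at hj; omega
    · apply ih
      intro j hj; omega

lemma eq_top_of_el (H : Subgroup (SLZ n)) (hH : ∀ i j : Fin n, i ≠ j → ∀ c, el i j c ∈ H) : H = ⊤ := by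
  rw [eq_top_iff]
  intro A _
  exact all_mem_aux H hH n A (fun j hj => by omega)

end Gen

set_option linter.unusedSimpArgs false
set_option linter.unusedVariables false

section Signed
variable {n : ℕ}

/-- permutation matrix of `σ` with the entry of column `d` replaced by `u` -/
def sm (σ : Equiv.Perm (Fin n)) (d : Fin n) (u : ℤ) : Matrix (Fin n) (Fin n) ℤ :=
  Matrix.of fun r s => if r = σ s then (if s = d then u else 1) else 0

lemma sm_mul (σ τ : Equiv.Perm (Fin n)) (d : Fin n) (u v : ℤ) (hτ : τ d = d) :
    sm σ d u * sm τ d v = sm (σ * τ) d (u * v) := by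
  ext r s
  have h : τ s = d ↔ s = d := by
    rw [← τ.injective.eq_iff (a := s) (b := d), hτ]
  simp only [Matrix.mul_apply, sm, Matrix.of_apply]
  rw [Finset.sum_eq_single (τ s)]
  · simp only [h, Equiv.Perm.mul_apply]
    split_ifs <;> simp
  · intro b _ hb; simp [hb]
  · simp

lemma sm_one (d : Fin n) : sm (1 : Equiv.Perm (Fin n)) d 1 = 1 := by
  ext r s; simp [sm, Matrix.one_apply]

lemma sm_det (σ : Equiv.Perm (Fin n)) (d : Fin n) (u : ℤ) :
    (sm σ d u).det = Equiv.Perm.sign σ * u := by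
  have : sm σ d u = (σ⁻¹).permMatrix ℤ * Matrix.diagonal (fun s => if s = d then u else 1) := by
    ext r s
    rw [Matrix.mul_diagonal]
    simp only [sm, Matrix.of_apply, Equiv.Perm.permMatrix, PEquiv.toMatrix_apply, Equiv.toPEquiv_apply]
    have : r = σ s ↔ s = σ⁻¹ r := by
      rw [Equiv.Perm.eq_inv_iff_eq, eq_comm]
    by_cases h : r = σ s
    · simp [h]
    · have h' := fun h2 => h (this.2 h2)
      have h3 : ¬ (Equiv.symm σ) r = s := fun h3 => h' h3.symm
      simp [h, h3]
  rw [this, Matrix.det_mul, Matrix.det_permutation, Matrix.det_diagonal]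
  simp [Finset.prod_ite_eq']

/-- signed permutation matrix in `SL` -/
def sp (σ : Equiv.Perm (Fin n)) (d : Fin n) : SLZ n :=
  ⟨sm σ d (Equiv.Perm.sign σ), by
    rw [sm_det, ← Units.val_mul, Int.units_mul_self]; rfl⟩

lemma sp_pow (σ : Equiv.Perm (Fin n)) (d : Fin n) (hd : σ d = d) (j : ℕ) :
    ((sp σ d ^ j : SLZ n) : Matrix (Fin n) (Fin n) ℤ) = sm (σ ^ j) d ((Equiv.Perm.sign (σ ^ j) : ℤˣ) : ℤ) := by
  induction j with
  | zero => simp [sm_one]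
  | succ j ih =>
    rw [pow_succ, Matrix.SpecialLinearGroup.coe_mul, ih, pow_succ, Equiv.Perm.sign_mul, Units.val_mul]
    exact sm_mul _ _ _ _ _ hd

lemma sp_order (σ : Equiv.Perm (Fin n)) (d : Fin n) (hd : σ d = d) :
    orderOf (sp σ d) = orderOf σ := by
  apply orderOf_eq_orderOf_iff.2
  intro j
  constructor
  · intro h
    have h1 := sp_pow σ d hd j
    rw [h] at h1
    ext1 s
    have h2 := congrFun (congrFun h1 ((σ ^ j) s)) s
    by_contra hne
    rw [Equiv.Perm.one_apply] at hne
    simp [sm, Matrix.one_apply, hne] at h2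
    split_ifs at h2 with h3
    · subst h3
      apply hne
      exact Function.IsFixedPt.perm_pow hd j
    · exact absurd h2 (by norm_num)
  · intro h
    apply Subtype.ext
    rw [sp_pow σ d hd j, h]
    simp [sm_one]

lemma sp_conj (σ : Equiv.Perm (Fin n)) (d : Fin n) {i j : Fin n} (h : i ≠ j) (c : ℤ) :
    ∃ e : ℤ, (e = 1 ∨ e = -1) ∧ (i ≠ d → j ≠ d → e = 1) ∧
      sp σ d * el i j c = el (σ i) (σ j) (e * c) * sp σ d := by
  have hs : σ i ≠ σ j := fun hh => h (σ.injective hh)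
  let w : Fin n → ℤ := fun s => if s = d then ((Equiv.Perm.sign σ : ℤˣ) : ℤ) else 1
  have hw : ∀ s, w s = 1 ∨ w s = -1 := by
    intro s
    simp only [w]
    rcases Int.units_eq_one_or (Equiv.Perm.sign σ) with h | h <;> rw [h] <;> split_ifs <;> simp
  have hw2 : ∀ s, w s * w s = 1 := by
    intro s; rcases hw s with h | h <;> rw [h] <;> norm_num
  refine ⟨w i * w j, ?_, ?_, ?_⟩
  · rcases hw i with h | h <;> rcases hw j with h' | h' <;> rw [h, h'] <;> norm_num
  · intro h1 h2; simp [w, h1, h2]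
  · apply Subtype.ext
    rw [Matrix.SpecialLinearGroup.coe_mul, Matrix.SpecialLinearGroup.coe_mul, el_coe h, el_coe hs,
      Matrix.mul_add, Matrix.add_mul, Matrix.mul_one, Matrix.one_mul]
    congr 1
    ext r s
    have e1 : ∀ r s, (sp σ d : Matrix (Fin n) (Fin n) ℤ) r s = if r = σ s then w s else 0 := by
      intro r s; rfl
    by_cases hr : r = σ i
    · subst hr
      by_cases hsj : s = j
      · subst hsj
        simp [e1]
        linear_combination (- w i * c) * hw2 s
      · have : ¬ σ j = σ s := fun hh => hsj (σ.injective hh).symm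
        simp [e1, hsj, this]
    · by_cases hsj : s = j
      · subst hsj; simp [e1, hr]
      · simp [e1, hr, hsj]

lemma el_comm {i j l : Fin n} (h1 : i ≠ j) (h2 : j ≠ l) (h3 : i ≠ l) :
    el i j 1 * el j l 1 = el i l 1 * (el j l 1 * el i j 1) := by
  apply Subtype.ext
  simp only [Matrix.SpecialLinearGroup.coe_mul, el_coe h1, el_coe h2, el_coe h3]
  simp [Matrix.mul_add, Matrix.add_mul, h1, h2, h3, h1.symm, h2.symm, h3.symm]
  abel

lemma xz_row {c p q r : Fin n} (h1 : c ≠ p) (h2 : c ≠ q) (h3 : c ≠ r) (h4 : p ≠ q) (h5 : p ≠ r) (h6 : q ≠ r) :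
    (el q r 1 * el p q (-1)) * (el q c 1 * el p c (-1)) =
      el p c (-1) * ((el q c 1 * el p c (-1)) * (el q r 1 * el p q (-1))) := by
  apply Subtype.ext
  simp only [Matrix.SpecialLinearGroup.coe_mul, el_coe h6, el_coe h4, el_coe h2.symm, el_coe h1.symm]
  simp [Matrix.mul_add, Matrix.add_mul, h1, h2, h3, h1.symm, h2.symm, h3.symm, h4, h5, h6, h4.symm, h5.symm, h6.symm,
    ← Matrix.single_neg]
  abel

lemma xz_col {c p q r : Fin n} (h1 : c ≠ p) (h2 : c ≠ q) (h3 : c ≠ r) (h4 : p ≠ q) (h5 : p ≠ r) (h6 : q ≠ r) :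
    (el q r 1 * el p q (-1)) * (el c q 1 * el c p (-1)) =
      el c p (-1) * (el q r 1 * el p q (-1)) := by
  apply Subtype.ext
  simp only [Matrix.SpecialLinearGroup.coe_mul, el_coe h6, el_coe h4, el_coe h2, el_coe h1]
  simp [Matrix.mul_add, Matrix.add_mul, h1, h2, h3, h1.symm, h2.symm, h3.symm, h4, h5, h6, h4.symm, h5.symm, h6.symm,
    ← Matrix.single_neg]
  abel

/-- relation: `el i j ∈ H` or equality -/
def Lnk (H : Subgroup (SLZ n)) (i j : Fin n) : Prop := i = j ∨ el i j 1 ∈ H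

lemma Lnk.trans {H : Subgroup (SLZ n)} {i j l : Fin n} (h1 : Lnk H i j) (h2 : Lnk H j l) : Lnk H i l := by
  rcases h1 with rfl | h1
  · exact h2
  rcases h2 with rfl | h2
  · exact Or.inr h1
  by_cases e1 : i = j
  · subst e1; exact Or.inr h2
  by_cases e2 : j = l
  · subst e2; exact Or.inr h1
  by_cases e3 : i = l
  · exact Or.inl e3
  right
  have := el_comm e1 e2 e3
  rw [← mul_inv_eq_iff_eq_mul] at this
  rw [← this]
  exact H.mul_mem (H.mul_mem h1 h2) (H.inv_mem (H.mul_mem h2 h1))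

lemma Lnk.map {H : Subgroup (SLZ n)} {i j : Fin n} {σ : Equiv.Perm (Fin n)} {d : Fin n}
    (hσ : sp σ d ∈ H) (h1 : Lnk H i j) : Lnk H (σ i) (σ j) := by
  rcases h1 with rfl | h1
  · exact Or.inl rfl
  by_cases e1 : i = j
  · subst e1; exact Or.inl rfl
  right
  have hs : σ i ≠ σ j := fun hh => e1 (σ.injective hh)
  obtain ⟨e, he, -, h⟩ := sp_conj σ d e1 1
  rw [← mul_inv_eq_iff_eq_mul] at h
  have hm : el (σ i) (σ j) (e * 1) ∈ H := by
    rw [← h]; exact H.mul_mem (H.mul_mem hσ h1) (H.inv_mem hσ)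
  rcases he with rfl | rfl
  · simpa using hm
  · rw [mul_one, el_neg hs] at hm
    simpa using hm

/-- difference of conjugates -/
lemma conj_mem {H : Subgroup (SLZ n)} {σ : Equiv.Perm (Fin n)} {d i j : Fin n} (hij : i ≠ j) (hi : i ≠ d)
    (hj : j ≠ d) (hσ : sp σ d ∈ H) (hT : el i j 1 * sp σ d * (el i j 1)⁻¹ ∈ H) :
    el (σ i) (σ j) 1 * el i j (-1) ∈ H := by
  obtain ⟨e, -, he, h⟩ := sp_conj σ d hij 1
  obtain rfl := he hi hj
  rw [one_mul] at h
  have := H.mul_mem hσ (H.inv_mem hT)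
  convert this using 1
  rw [el_neg hij, eq_mul_inv_of_mul_eq h.symm]
  group

end Signed

section Cyc

lemma order_conj {G : Type*} [Group G] (a b : G) : orderOf (a * b * a⁻¹) = orderOf b := by
  simpa using (MulAut.conj a).orderOf_eq b

lemma exists_perm (s m k n : ℕ) (hm : 1 ≤ m) (hk : 2 ≤ k) (hn : s + m * k ≤ n) :
    ∃ σ : Equiv.Perm (Fin n), orderOf σ = k ∧
      (∀ x : Fin n, (x.1 < s ∨ s + m * k ≤ x.1) → σ x = x) ∧
      (∀ x y : Fin n, y.1 = x.1 + 1 → s ≤ x.1 → x.1 < s + m * k → (x.1 - s) % k ≠ k - 1 → σ x = y) := by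
  obtain ⟨k, rfl⟩ : ∃ l, k = l + 2 := ⟨k - 2, by omega⟩
  have hlt : ∀ p : Fin m × Fin (k+2), s + (finProdFinEquiv p).1 < n := by
    intro p; have := (finProdFinEquiv p).2; omega
  let ι : Fin m × Fin (k+2) ↪ Fin n :=
    ⟨fun p => ⟨s + (finProdFinEquiv p).1, hlt p⟩, by
      intro p q h
      apply finProdFinEquiv.injective
      apply Fin.ext
      simpa using h⟩
  have hι : ∀ p, (ι p).1 = s + (p.2.1 + (k+2) * p.1.1) := fun p => rfl
  let e : Equiv.Perm (Fin m × Fin (k+2)) := Equiv.prodCongr (Equiv.refl _) (Equiv.addRight 1)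
  have he : ∀ (j : ℕ) p, ((e ^ j) p).1 = p.1 ∧ ((e ^ j) p).2.1 = (p.2.1 + j) % (k+2) := by
    intro j
    induction j with
    | zero => intro p; simp [Nat.mod_eq_of_lt p.2.2]
    | succ j ih =>
      intro p
      rw [pow_succ, Equiv.Perm.mul_apply]
      refine ⟨(ih (e p)).1, ?_⟩
      rw [(ih (e p)).2]
      have : (e p).2.1 = (p.2.1 + 1) % (k+2) := by simp [e, Fin.val_add]
      rw [this, Nat.mod_add_mod, add_assoc, add_comm 1 j]
  refine ⟨Equiv.Perm.viaEmbeddingHom ι e, ?_, ?_, ?_⟩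
  · rw [orderOf_injective _ (Equiv.Perm.viaEmbeddingHom_injective ι)]
    apply Nat.dvd_antisymm
    · apply orderOf_dvd_of_pow_eq_one
      ext1 p
      have h := he (k+2) p
      apply Prod.ext h.1
      apply Fin.ext
      rw [h.2]; simp [Nat.mod_eq_of_lt p.2.2]
    · have h := (he (orderOf e) (⟨0, by omega⟩, 0)).2
      rw [pow_orderOf_eq_one] at h
      simp at h
      exact Nat.dvd_of_mod_eq_zero h.symm
  · intro x hx
    rw [Equiv.Perm.viaEmbeddingHom_apply]
    apply Equiv.Perm.viaEmbedding_apply_of_notMem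
    rintro ⟨p, hp⟩
    have h1 : x.1 = s + (finProdFinEquiv p).1 := by rw [← hp]; rfl
    have := (finProdFinEquiv p).2
    omega
  · intro x y hxy hsx hx hmod
    have hq : (x.1 - s) / (k+2) < m := by
      rw [Nat.div_lt_iff_lt_mul (by omega)]; omega
    have hr : (x.1 - s) % (k+2) < k + 2 := Nat.mod_lt _ (by omega)
    have hdm := Nat.mod_add_div (x.1 - s) (k+2)
    have hx' : x = ι (⟨_, hq⟩, ⟨_, hr⟩) := by
      apply Fin.ext
      rw [hι]; simp only; omega
    have hy' : y = ι (⟨_, hq⟩, ⟨(x.1 - s) % (k+2) + 1, by omega⟩) := by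
      apply Fin.ext
      rw [hι]; simp only; omega
    have h1 := he 1 (⟨_, hq⟩, ⟨_, hr⟩)
    rw [pow_one] at h1
    rw [hy', Equiv.Perm.viaEmbeddingHom_apply]
    conv_lhs => rw [hx']
    rw [Equiv.Perm.viaEmbedding_apply]
    congr 1
    refine Prod.ext (by simpa using h1.1) ?_
    apply Fin.ext
    rw [h1.2]
    exact Nat.mod_eq_of_lt (by simp only; omega)

end Cyc

/-- For `k ≥ 6` and `n ≥ 2k`, the group `SL(n, ℤ)` is generated by seven
elements of order exactly `k`. -/
theorem SL_n_Z_generated_by_seven_elements_of_order_k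
    (k n : ℕ) (hk : 6 ≤ k) (hn : 2 * k ≤ n) :
    ∃ M₁ M₂ M₃ M₄ M₅ M₆ M₇ : Matrix.SpecialLinearGroup (Fin n) ℤ,
      orderOf M₁ = k ∧ orderOf M₂ = k ∧ orderOf M₃ = k ∧ orderOf M₄ = k ∧
      orderOf M₅ = k ∧ orderOf M₆ = k ∧ orderOf M₇ = k ∧
      Subgroup.closure {M₁, M₂, M₃, M₄, M₅, M₆, M₇} = ⊤ := by
  obtain ⟨m, hm1, hm2, hm3⟩ : ∃ m, 1 ≤ m ∧ m * k + 1 ≤ n ∧ n ≤ m * k + k := by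
    refine ⟨(n - 1) / k, ?_, ?_, ?_⟩
    · rw [Nat.le_div_iff_mul_le (by omega)]; omega
    · have := Nat.div_mul_le_self (n - 1) k; omega
    · have := Nat.lt_div_mul_add (a := n - 1) (b := k) (by omega); omega
  obtain ⟨σ₁, o1, f1, c1⟩ := exists_perm 0 m k n hm1 (by omega) (by omega)
  obtain ⟨σ₂, o2, f2, c2⟩ := exists_perm 1 m k n hm1 (by omega) (by omega)
  obtain ⟨σ₃, o3, f3, c3⟩ := exists_perm (n - k) 1 k n le_rfl (by omega) (by omega)
  let z : Fin n := ⟨0, by omega⟩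
  let o : Fin n := ⟨1, by omega⟩
  let l : Fin n := ⟨n - 1, by omega⟩
  let p : Fin n := ⟨n - k + 1, by omega⟩
  let q : Fin n := ⟨n - k + 2, by omega⟩
  let r : Fin n := ⟨n - k + 3, by omega⟩
  have c3' : ∀ x y : Fin n, y.1 = x.1 + 1 → n - k ≤ x.1 → σ₃ x = y := by
    intro x y hxy hx
    have := y.2
    refine c3 x y hxy hx (by omega) ?_
    rw [Nat.mod_eq_of_lt (by omega)]; omega
  have s1l : σ₁ l = l := f1 _ (Or.inr (by simp only [l]; omega))
  have s2z : σ₂ z = z := f2 _ (Or.inl (by simp only [z]; omega))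
  have s3z : σ₃ z = z := f3 _ (Or.inl (by simp only [z]; omega))
  have s3o : σ₃ o = o := f3 _ (Or.inl (by simp only [o]; omega))
  have s3p : σ₃ p = q := c3' _ _ rfl (by simp only [p]; omega)
  have s3q : σ₃ q = r := c3' _ _ rfl (by simp only [q]; omega)
  have nzp : z ≠ p := by simp only [z, p, ne_eq, Fin.mk.injEq]; omega
  have nzq : z ≠ q := by simp only [z, q, ne_eq, Fin.mk.injEq]; omega
  have nzr : z ≠ r := by simp only [z, r, ne_eq, Fin.mk.injEq]; omega
  have nzo : z ≠ o := by simp only [z, o, ne_eq, Fin.mk.injEq]; omega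
  have npo : p ≠ o := by simp only [p, o, ne_eq, Fin.mk.injEq]; omega
  have nqo : q ≠ o := by simp only [q, o, ne_eq, Fin.mk.injEq]; omega
  have npq : p ≠ q := by simp only [p, q, ne_eq, Fin.mk.injEq]; omega
  have npr : p ≠ r := by simp only [p, r, ne_eq, Fin.mk.injEq]; omega
  have nqr : q ≠ r := by simp only [q, r, ne_eq, Fin.mk.injEq]; omega
  have O3 : orderOf (sp σ₃ o) = k := by rw [sp_order _ _ s3o, o3]
  refine ⟨sp σ₁ l, sp σ₂ z, sp σ₃ o, el p q 1 * sp σ₃ o * (el p q 1)⁻¹,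
    el p z 1 * sp σ₃ o * (el p z 1)⁻¹, el z p 1 * sp σ₃ o * (el z p 1)⁻¹, sp σ₃ o,
    by rw [sp_order _ _ s1l, o1], by rw [sp_order _ _ s2z, o2], O3,
    by rw [order_conj, O3], by rw [order_conj, O3], by rw [order_conj, O3], O3, ?_⟩
  set H := Subgroup.closure ({sp σ₁ l, sp σ₂ z, sp σ₃ o, el p q 1 * sp σ₃ o * (el p q 1)⁻¹,
    el p z 1 * sp σ₃ o * (el p z 1)⁻¹, el z p 1 * sp σ₃ o * (el z p 1)⁻¹, sp σ₃ o} :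
      Set (Matrix.SpecialLinearGroup (Fin n) ℤ)) with hH
  have m1 : sp σ₁ l ∈ H := Subgroup.subset_closure (by simp)
  have m2 : sp σ₂ z ∈ H := Subgroup.subset_closure (by simp)
  have m3 : sp σ₃ o ∈ H := Subgroup.subset_closure (by simp)
  have m4 : el p q 1 * sp σ₃ o * (el p q 1)⁻¹ ∈ H := Subgroup.subset_closure (by simp)
  have m5 : el p z 1 * sp σ₃ o * (el p z 1)⁻¹ ∈ H := Subgroup.subset_closure (by simp)
  have m6 : el z p 1 * sp σ₃ o * (el z p 1)⁻¹ ∈ H := Subgroup.subset_closure (by simp)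
  have X := conj_mem npq npo nqo m3 m4
  have Z := conj_mem nzp.symm npo nzo m3 m5
  have Z' := conj_mem nzp nzo npo m3 m6
  rw [s3p, s3q] at X
  rw [s3p, s3z] at Z Z'
  have Rpz : Lnk H p z := by
    right
    have h := xz_row nzp nzq nzr npq npr nqr
    rw [← mul_inv_eq_iff_eq_mul] at h
    have h2 := H.mul_mem (H.mul_mem X Z) (H.inv_mem (H.mul_mem Z X))
    rw [h, el_neg nzp.symm] at h2
    simpa using h2
  have Rzp : Lnk H z p := by
    right
    have h := xz_col nzp nzq nzr npq npr nqr
    rw [← mul_inv_eq_iff_eq_mul] at h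
    have h2 := H.mul_mem (H.mul_mem X Z') (H.inv_mem X)
    rw [h, el_neg nzp] at h2
    simpa using h2
  let C : Fin n → Prop := fun x => Lnk H x z ∧ Lnk H z x
  have C3 : ∀ x, C x → C (σ₃ x) := by
    intro x hx
    have h1 := hx.1.map m3
    have h2 := hx.2.map m3
    rw [s3z] at h1 h2
    exact ⟨h1, h2⟩
  have C2 : ∀ x, C x → C (σ₂ x) := by
    intro x hx
    have h1 := hx.1.map m2
    have h2 := hx.2.map m2
    rw [s2z] at h1 h2
    exact ⟨h1, h2⟩
  have Cend : ∀ j (hj : n - k + 1 + j < n), C ⟨n - k + 1 + j, hj⟩ := by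
    intro j
    induction j with
    | zero => intro hj; exact ⟨Rpz, Rzp⟩
    | succ j ih =>
      intro hj
      have := C3 _ (ih (by omega))
      rwa [c3' _ ⟨n - k + 1 + (j + 1), hj⟩ rfl (by simp only; omega)] at this
  have Cl : C l := by
    have := Cend (k - 2) (by omega)
    convert this using 1
    apply Fin.ext; simp only [l]; omega
  have C1 : ∀ x, C x → C (σ₁ x) := by
    intro x hx
    have h1 := (hx.1.trans Cl.2).map m1
    have h2 := (Cl.1.trans hx.2).map m1
    rw [s1l] at h1 h2
    exact ⟨h1.trans Cl.1, Cl.2.trans h2⟩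
  have Call : ∀ x (hx : x < n), C ⟨x, hx⟩ := by
    intro x
    induction x with
    | zero => intro hx; exact ⟨Or.inl rfl, Or.inl rfl⟩
    | succ x ih =>
      intro hx
      have hC := ih (by omega)
      by_cases hb : n - k ≤ x
      · have := C3 _ hC
        rwa [c3' _ ⟨x + 1, hx⟩ rfl hb] at this
      · by_cases hmod : x % k = k - 1
        · have := C2 _ hC
          have hxx := Nat.mod_le x k
          rwa [c2 _ ⟨x + 1, hx⟩ rfl (by simp only; omega) (by simp only; omega) ?_] at this
          simp only
          have : (x - 1) % k = k - 2 := by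
            have h := Nat.mod_add_div x k
            have h2 : x - 1 = (k - 2) + k * (x / k) := by omega
            rw [h2, Nat.add_mul_mod_self_left, Nat.mod_eq_of_lt (by omega)]
          omega
        · have := C1 _ hC
          rwa [c1 _ ⟨x + 1, hx⟩ rfl (by simp only; omega) (by simp only; omega) (by simpa using hmod)] at this
  apply eq_top_of_el
  intro i j hij c
  apply el_mem H hij
  exact (((Call i.1 i.2).1.trans (Call j.1 j.2).2).resolve_left hij)
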